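/- Fix β > 0 and a, b > 0, and for each k ≥ 0 let α_k be B(kβ/4 + a, kβ/4 + b)-distributed if k is even and B((k−1)β/4 + a + b, (k+1)β/4)-distributed if k is odd. Then there is a constant C depending only on β, a, b such that for every k ≥ 0 and every ψ ∈ ℝ, E{Υ̃(ψ, α_k)⁴} ≤ C (k+1)^{−2}, where Υ̃(ψ, α) = 2[α − E(α)] sin ψ. -/

import Mathlib

open MeasureTheory ProbabilityTheory Filter
open scoped Real NNReal

/-- `Υ(ψ, α) = −2 Im log(1 − α e^{iψ})` (principal branch of the logarithm). -/
noncomputable def Ups (ψ : ℝ) (z : ℂ) : ℝ :=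
  -2 * (Complex.log (1 - z * Complex.exp (ψ * Complex.I))).im

/-- The `B(s,t)` distribution on `ℝ`: supported on `(−1,1)` with density
`2^{1−s−t} Γ(s+t)/(Γ(s)Γ(t)) (1−x)^{s−1}(1+x)^{t−1}` w.r.t. Lebesgue measure. -/
noncomputable def betaDist (s t : ℝ) : Measure ℝ :=
  (volume : Measure ℝ).withDensity fun x =>
    ENNReal.ofReal (if x ∈ Set.Ioo (-1 : ℝ) 1 then
      2 ^ (1 - s - t) * Real.Gamma (s + t) / (Real.Gamma s * Real.Gamma t) *
        (1 - x) ^ (s - 1) * (1 + x) ^ (t - 1) else 0)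

/-- The distribution of the Verblunsky coefficient `α_k` in the Jacobi β-ensemble model:
`B(kβ/4 + a, kβ/4 + b)` for `k` even and `B((k−1)β/4 + a + b, (k+1)β/4)` for `k` odd. -/
noncomputable def jacobiAlphaDist (β a b : ℝ) (k : ℕ) : Measure ℝ :=
  if Even k then betaDist ((k : ℝ) * β / 4 + a) ((k : ℝ) * β / 4 + b)
  else betaDist (((k : ℝ) - 1) * β / 4 + a + b) (((k : ℝ) + 1) * β / 4)

/-- real density of `betaDist` -/
noncomputable def bdens (s t x : ℝ) : ℝ :=
  if x ∈ Set.Ioo (-1 : ℝ) 1 then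
      2 ^ (1 - s - t) * Real.Gamma (s + t) / (Real.Gamma s * Real.Gamma t) *
        (1 - x) ^ (s - 1) * (1 + x) ^ (t - 1) else 0

lemma bdens_nonneg {s t : ℝ} (hs : 0 < s) (ht : 0 < t) (x : ℝ) : 0 ≤ bdens s t x := by
  unfold bdens
  split_ifs with h
  · have h1 : 0 < 1 - x := by linarith [h.2]
    have h2 : 0 < 1 + x := by linarith [h.1]
    have := Real.Gamma_pos_of_pos hs
    have := Real.Gamma_pos_of_pos ht
    have := Real.Gamma_pos_of_pos (add_pos hs ht)
    positivity
  · exact le_rfl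

lemma bdens_meas (s t : ℝ) : Measurable (bdens s t) :=
  Measurable.ite measurableSet_Ioo (by fun_prop) (by fun_prop)

lemma bdens_eq {s t : ℝ} (hs : 0 < s) (ht : 0 < t) (x : ℝ) :
    bdens s t x = (1 / 2) * betaPDFReal s t (1 / 2 + (-1 / 2) * x) := by
  unfold bdens betaPDFReal beta
  by_cases h : x ∈ Set.Ioo (-1 : ℝ) 1
  · have h1 : 0 < 1 - x := by linarith [h.2]
    have h2 : 0 < 1 + x := by linarith [h.1]
    have g1 := Real.Gamma_pos_of_pos hs
    have g2 := Real.Gamma_pos_of_pos ht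
    have g3 := Real.Gamma_pos_of_pos (add_pos hs ht)
    rw [if_pos h, if_pos ⟨by linarith, by linarith⟩]
    have e1 : (1 / 2 + (-1 / 2) * x) = (1 - x) / 2 := by ring
    have e2 : 1 - (1 - x) / 2 = (1 + x) / 2 := by ring
    rw [e1, e2, Real.div_rpow h1.le (by norm_num), Real.div_rpow h2.le (by norm_num)]
    have e3 : (2 : ℝ) ^ (1 - s - t) = 1 / (2 * (2 ^ (s - 1) * 2 ^ (t - 1))) := by
      rw [← Real.rpow_add two_pos, show (1 - s - t) = -(1 + (s - 1 + (t - 1))) by ring,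
        Real.rpow_neg two_pos.le, Real.rpow_add two_pos 1, Real.rpow_one, one_div]
    rw [e3]
    have p1 : (0 : ℝ) < 2 ^ (s - 1) := by positivity
    have p2 : (0 : ℝ) < 2 ^ (t - 1) := by positivity
    field_simp
  · rw [if_neg h, if_neg, mul_zero]
    rintro ⟨h1, h2⟩
    exact h ⟨by linarith, by linarith⟩

/-- integrable with given integral -/
def HasI (f : ℝ → ℝ) (v : ℝ) : Prop := Integrable f ∧ ∫ x, f x = v

lemma HasI.add {f g : ℝ → ℝ} {v w : ℝ} (hf : HasI f v) (hg : HasI g w) :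
    HasI (fun x => f x + g x) (v + w) :=
  ⟨hf.1.add hg.1, by rw [integral_add hf.1 hg.1, hf.2, hg.2]⟩

lemma HasI.mul {f : ℝ → ℝ} {v : ℝ} (c : ℝ) (hf : HasI f v) :
    HasI (fun x => c * f x) (c * v) :=
  ⟨hf.1.const_mul c, by rw [integral_const_mul, hf.2]⟩

lemma bdens_one {s t : ℝ} (hs : 0 < s) (ht : 0 < t) : HasI (bdens s t) 1 := by
  have h0 : ∀ x, 0 ≤ betaPDFReal s t x := by
    intro x
    by_cases h : 0 < x ∧ x < 1
    · exact (betaPDFReal_pos h.1 h.2 hs ht).le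
    · simp [betaPDFReal, h]
  have h1 : ∫ x, betaPDFReal s t x = 1 := by
    rw [integral_eq_lintegral_of_nonneg_ae (Eventually.of_forall h0)
      (measurable_betaPDFReal s t).aestronglyMeasurable]
    have := lintegral_betaPDF_eq_one hs ht
    unfold betaPDF at this
    rw [this]; simp
  have h2 : ∫ x, bdens s t x = 1 := by
    simp_rw [bdens_eq hs ht]
    rw [integral_const_mul,
      Measure.integral_comp_mul_left (fun x => betaPDFReal s t (1 / 2 + x)) (-1 / 2),
      integral_add_left_eq_self (fun x => betaPDFReal s t x), h1]
    norm_num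
  refine ⟨?_, h2⟩
  by_contra h
  rw [integral_undef h] at h2
  exact zero_ne_one h2

lemma bdens_rec {s t : ℝ} (hs : 0 < s) (ht : 0 < t) (x : ℝ) :
    ((1 - x) / 2) * bdens s t x = s / (s + t) * bdens (s + 1) t x := by
  unfold bdens
  split_ifs with h
  · have h1 : 0 < 1 - x := by linarith [h.2]
    have h2 : 0 < 1 + x := by linarith [h.1]
    have g1 := Real.Gamma_pos_of_pos hs
    have g2 := Real.Gamma_pos_of_pos ht
    have g3 := Real.Gamma_pos_of_pos (add_pos hs ht)
    have hst := add_pos hs ht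
    rw [show s + 1 + t = s + t + 1 by ring, Real.Gamma_add_one hst.ne', Real.Gamma_add_one hs.ne',
      show s + 1 - 1 = (s - 1) + 1 by ring, Real.rpow_add_one h1.ne',
      show 1 - (s + 1) - t = (1 - s - t) - 1 by ring, Real.rpow_sub_one two_ne_zero]
    field_simp
  · simp

/-- moments -/
noncomputable def bmom (t : ℝ) : ℕ → ℝ → ℝ
  | 0, _ => 1
  | (j + 1), s => s / (s + t) * bmom t j (s + 1)

lemma bdens_mom {t : ℝ} (ht : 0 < t) (j : ℕ) : ∀ {s : ℝ}, 0 < s →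
    HasI (fun x => ((1 - x) / 2) ^ j * bdens s t x) (bmom t j s) := by
  induction j with
  | zero => intro s hs; simpa [bmom] using bdens_one hs ht
  | succ j ih =>
    intro s hs
    have := (ih (s := s + 1) (by linarith)).mul (s / (s + t))
    convert this using 1
    · funext x
      rw [pow_succ, mul_assoc, bdens_rec hs ht]; ring
    · rfl

lemma integral_betaDist {s t : ℝ} (hs : 0 < s) (ht : 0 < t) (f : ℝ → ℝ) :
    ∫ x, f x ∂(betaDist s t) = ∫ x, f x * bdens s t x := by
  have : betaDist s t = volume.withDensity (fun x => ENNReal.ofReal (bdens s t x)) := rfl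
  rw [this, integral_withDensity_eq_integral_toReal_smul (bdens_meas s t).ennreal_ofReal
    (Eventually.of_forall fun x => ENNReal.ofReal_lt_top)]
  congr 1
  funext x
  rw [ENNReal.toReal_ofReal (bdens_nonneg hs ht x), smul_eq_mul, mul_comm]

lemma betaDist_mean {s t : ℝ} (hs : 0 < s) (ht : 0 < t) :
    ∫ x, x ∂(betaDist s t) = 1 - 2 * (s / (s + t)) := by
  rw [integral_betaDist hs ht (fun x => x)]
  have := ((bdens_mom ht 0 hs).add ((bdens_mom ht 1 hs).mul (-2))).2
  simp only [bmom] at this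
  calc _ = _ := by congr 1; funext x; ring
    _ = _ := this
    _ = _ := by ring

lemma betaDist_fourth {s t : ℝ} (hs : 0 < s) (ht : 0 < t) (c : ℝ) :
    ∫ x, (2 * (x - (1 - 2 * (s / (s + t)))) * c) ^ 4 ∂(betaDist s t) =
      256 * c ^ 4 * (3 * (s * t) * (2 * (s + t) ^ 2 + s * t * (s + t - 6)) /
        ((s + t) ^ 4 * (s + t + 1) * (s + t + 2) * (s + t + 3))) := by
  rw [integral_betaDist hs ht (fun x => (2 * (x - (1 - 2 * (s / (s + t)))) * c) ^ 4)]
  have hst := add_pos hs ht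
  set m := s / (s + t) with hm
  have := ((((((bdens_mom ht 4 hs).add ((bdens_mom ht 3 hs).mul (-4 * m))).add
    ((bdens_mom ht 2 hs).mul (6 * m ^ 2))).add ((bdens_mom ht 1 hs).mul (-4 * m ^ 3))).add
    ((bdens_mom ht 0 hs).mul (m ^ 4))).mul (256 * c ^ 4)).2
  calc _ = _ := by congr 1; funext x; ring
    _ = _ := this
    _ = _ := by
      congr 1
      simp only [bmom]
      rw [hm, show s + 1 + t = s + t + 1 by ring, show s + 1 + 1 + t = s + t + 2 by ring,
        show s + 1 + 1 + 1 + t = s + t + 3 by ring]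
      field_simp
      ring

lemma fourth_bound {s t : ℝ} (hs : 0 < s) (ht : 0 < t) :
    3 * (s * t) * (2 * (s + t) ^ 2 + s * t * (s + t - 6)) /
        ((s + t) ^ 4 * (s + t + 1) * (s + t + 2) * (s + t + 3)) ≤ 1 / (s + t) ^ 2 := by
  have hst := add_pos hs ht
  have hp : s * t ≤ (s + t) ^ 2 / 4 := by nlinarith [sq_nonneg (s - t)]
  have hp0 : 0 < s * t := mul_pos hs ht
  generalize s + t = n at *
  generalize s * t = p at *
  have h1 : 2 * n ^ 2 + p * (n - 6) ≤ n ^ 2 / 4 * (n + 8) := by nlinarith [mul_le_mul_of_nonneg_right hp hst.le]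
  have h2 : 3 * p * (2 * n ^ 2 + p * (n - 6)) ≤ 3 * (n ^ 2 / 4) * (n ^ 2 / 4 * (n + 8)) := by
    calc _ ≤ 3 * p * (n ^ 2 / 4 * (n + 8)) := by gcongr
      _ ≤ _ := by gcongr
  rw [div_le_div_iff₀ (by positivity) (by positivity)]
  calc _ ≤ 3 * (n ^ 2 / 4) * (n ^ 2 / 4 * (n + 8)) * n ^ 2 := by gcongr
    _ = n ^ 4 * (3 / 16 * n ^ 3 + 3 / 2 * n ^ 2) := by ring
    _ ≤ n ^ 4 * ((n + 1) * (n + 2) * (n + 3)) := by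
      gcongr
      nlinarith [pow_pos hst 3, pow_pos hst 2]
    _ = _ := by ring

lemma betaDist_final {s t : ℝ} (hs : 0 < s) (ht : 0 < t) (ψ : ℝ) :
    ∫ x, (2 * (x - ∫ y, y ∂(betaDist s t)) * Real.sin ψ) ^ 4 ∂(betaDist s t)
      ≤ 256 / (s + t) ^ 2 := by
  rw [betaDist_mean hs ht, betaDist_fourth hs ht]
  have h1 : Real.sin ψ ^ 4 ≤ 1 := by
    have := Real.sin_sq_le_one ψ
    nlinarith [sq_nonneg (Real.sin ψ)]
  calc _ ≤ 256 * Real.sin ψ ^ 4 * (1 / (s + t) ^ 2) := by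
        exact mul_le_mul_of_nonneg_left (fourth_bound hs ht) (by positivity)
    _ ≤ 256 * 1 * (1 / (s + t) ^ 2) := by gcongr
    _ = _ := by ring

/-- there is `C = C(β,a,b)` such that if `α_k` has the Jacobi-`β`-ensemble
Verblunsky law, then `E{Υ̃(ψ,α_k)⁴} ≤ C (k+1)^{−2}`, where `Υ̃(ψ,α) = 2[α − E(α)] sin ψ`. -/
theorem beta_UpsT_fourth_moment_le {Ω : Type*} [MeasurableSpace Ω] (μ : Measure Ω)
    [IsProbabilityMeasure μ] (β a b : ℝ) (hβ : 0 < β) (ha : 0 < a) (hb : 0 < b)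
    (α : ℕ → Ω → ℝ) (hα : ∀ k, Measurable (α k))
    (hlaw : ∀ k, Measure.map (α k) μ = jacobiAlphaDist β a b k) :
    ∃ C : ℝ, ∀ (k : ℕ) (ψ : ℝ),
      ∫ ω, (2 * (α k ω - ∫ ω', α k ω' ∂μ) * Real.sin ψ) ^ 4 ∂μ ≤ C / ((k : ℝ) + 1) ^ 2 := by
  have hab := add_pos ha hb
  have hc : 0 < min (β / 2) (a + b) := lt_min (by linarith) hab
  refine ⟨256 / (min (β / 2) (a + b)) ^ 2, fun k ψ => ?_⟩
  have hm : ∫ ω', α k ω' ∂μ = ∫ y, y ∂(jacobiAlphaDist β a b k) := by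
    rw [← hlaw k, integral_map (hα k).aemeasurable (by fun_prop)]
  have h4 : ∫ ω, (2 * (α k ω - ∫ ω', α k ω' ∂μ) * Real.sin ψ) ^ 4 ∂μ =
      ∫ x, (2 * (x - ∫ y, y ∂(jacobiAlphaDist β a b k)) * Real.sin ψ) ^ 4
        ∂(jacobiAlphaDist β a b k) := by
    rw [hm]
    generalize ∫ y, y ∂(jacobiAlphaDist β a b k) = m
    rw [← hlaw k, integral_map (hα k).aemeasurable (by fun_prop)]
  obtain ⟨s, t, hs, ht, hst, hd⟩ : ∃ s t : ℝ, 0 < s ∧ 0 < t ∧ s + t = k * β / 2 + a + b ∧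
      jacobiAlphaDist β a b k = betaDist s t := by
    unfold jacobiAlphaDist
    split_ifs with h
    · exact ⟨_, _, by positivity, by positivity, by ring, rfl⟩
    · have hk : (1 : ℝ) ≤ k := by
        rcases Nat.eq_zero_or_pos k with h0 | h0
        · simp [h0] at h
        · exact_mod_cast h0
      have : 0 ≤ ((k : ℝ) - 1) * β / 4 := by
        have : 0 ≤ (k : ℝ) - 1 := by linarith
        positivity
      exact ⟨_, _, by linarith, by positivity, by ring, rfl⟩
  rw [h4, hd]
  refine (betaDist_final hs ht ψ).trans ?_
  rw [div_div, ← mul_pow]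
  have : min (β / 2) (a + b) * ((k : ℝ) + 1) ≤ s + t := by
    rw [hst]
    have h1 := min_le_left (β / 2) (a + b)
    have h2 := min_le_right (β / 2) (a + b)
    nlinarith [mul_le_mul_of_nonneg_right h1 (Nat.cast_nonneg (α := ℝ) k)]
  gcongr
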